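/- Every invertible n×n matrix A over 𝔽₂ admits a PUL decomposition: there exist a permutation matrix P, an invertible upper-triangular matrix U, and an invertible lower-triangular matrix L over 𝔽₂ such that A = P · U · L. -/

import Mathlib

/-- `P` is a permutation matrix: a 0–1 matrix with `P i j = 1` iff `i = σ j`
for some permutation `σ`. -/
def IsPermMatrix {n : ℕ} (P : Matrix (Fin n) (Fin n) (ZMod 2)) : Prop :=
  ∃ σ : Equiv.Perm (Fin n), ∀ i j : Fin n, P i j = if i = σ j then 1 else 0

/-!
This is Gaussian elimination starting from the last column. That column of an invertible matrix over
a local ring contains a unit, which a row swap moves to the last row. The Schur complement of this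
pivot is again invertible, so inductively it has the form `P * U * L`. Bordering `U` by the pivot
column and `L` by the pivot row, rescaled by the inverse of the pivot, factors the whole matrix.
-/

section

open Matrix Equiv OrderDual

variable {ι κ m n α R : Type*}

theorem isPermMatrix_permMatrix {n : ℕ} (σ : Perm (Fin n)) :
    IsPermMatrix (σ.permMatrix (ZMod 2)) :=
  ⟨σ.symm, fun i j => by simp [Perm.permMatrix, eq_symm_apply, eq_comm]⟩

theorem exists_isUnit_apply_of_isUnit [Fintype ι] [DecidableEq ι] [CommSemiring R] [IsLocalRing R]
    {A : Matrix ι ι R} (hA : IsUnit A) (j : ι) : ∃ i, IsUnit (A i j) := by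
  obtain ⟨B, hBA⟩ := hA.exists_left_inv
  have hsum : IsUnit (∑ i, B j i * A i j) := by
    rw [← Matrix.mul_apply, hBA, one_apply_eq]
    exact isUnit_one
  obtain ⟨i, -, hi⟩ := IsLocalRing.exists_of_isUnit_sum hsum
  exact ⟨i, isUnit_of_mul_isUnit_right hi⟩

theorem blockTriangular_fromBlocks_zero₂₁ [Zero R] [Preorder α] {b : m ⊕ n → α}
    (hb : ∀ i j, b (Sum.inl i) ≤ b (Sum.inr j)) {A : Matrix m m R} (B : Matrix m n R)
    {D : Matrix n n R} (hA : A.BlockTriangular (b ∘ Sum.inl))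
    (hD : D.BlockTriangular (b ∘ Sum.inr)) : (fromBlocks A B 0 D).BlockTriangular b := by
  rintro (i | i) (j | j) hij
  · exact hA hij
  · exact absurd hij (hb i j).not_gt
  · rfl
  · exact hD hij

theorem blockTriangular_toDual_fromBlocks_zero₁₂ [Zero R] [Preorder α] {b : m ⊕ n → α}
    (hb : ∀ i j, b (Sum.inl i) ≤ b (Sum.inr j)) {A : Matrix m m R} (C : Matrix n m R)
    {D : Matrix n n R} (hA : A.BlockTriangular (toDual ∘ b ∘ Sum.inl))
    (hD : D.BlockTriangular (toDual ∘ b ∘ Sum.inr)) :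
    (fromBlocks A 0 C D).BlockTriangular (toDual ∘ b) := by
  have hT := blockTriangular_fromBlocks_zero₂₁ hb Cᵀ hA.transpose hD.transpose
  simpa only [fromBlocks_transpose, transpose_transpose, transpose_zero] using hT.transpose

/-- `A` has a PUL decomposition: it is the product of a permutation matrix, an upper triangular
matrix and a lower triangular matrix. The indices are ordered by the labels `b`, so that the
induction can pass to the rows and columns without the pivot; lower triangular means block
triangular for the dual order. -/
def HasPUL [Fintype ι] [DecidableEq ι] [Semiring R] [LT α] (b : ι → α) (A : Matrix ι ι R) : Prop :=
  ∃ (σ : Perm ι) (U L : Matrix ι ι R),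
    U.BlockTriangular b ∧ L.BlockTriangular (toDual ∘ b) ∧ A = σ.permMatrix R * U * L

section Semiring

variable [Fintype ι] [DecidableEq ι] [Fintype κ] [DecidableEq κ] [Semiring R]

theorem hasPUL_iff_exists_submatrix [LT α] {b : ι → α} {A : Matrix ι ι R} :
    HasPUL b A ↔ ∃ (σ : Perm ι) (U L : Matrix ι ι R),
      U.BlockTriangular b ∧ L.BlockTriangular (toDual ∘ b) ∧ A = (U * L).submatrix σ id := by
  simp_rw [HasPUL, Matrix.mul_assoc, Perm.permMatrix, PEquiv.toMatrix_toPEquiv_mul]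

theorem HasPUL.of_submatrix [LT α] {b : ι → α} {A : Matrix ι ι R} (e f : κ ≃ ι)
    (h : HasPUL (b ∘ f) (A.submatrix e f)) : HasPUL b A := by
  rw [hasPUL_iff_exists_submatrix] at h ⊢
  obtain ⟨σ, U, L, hU, hL, hA⟩ := h
  refine ⟨e.symm.trans (σ.trans f), U.submatrix f.symm f.symm, L.submatrix f.symm f.symm,
    blockTriangular_reindex_iff.mpr hU, blockTriangular_reindex_iff.mpr hL, ?_⟩
  calc A = (A.submatrix e f).submatrix e.symm f.symm := by simp
    _ = ((U * L).submatrix σ id).submatrix e.symm f.symm := by rw [hA]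
    _ = (U.submatrix f.symm f.symm * L.submatrix f.symm f.symm).submatrix
          (e.symm.trans (σ.trans f)) id := by
      rw [submatrix_mul_equiv]
      ext i j
      simp

end Semiring

theorem HasPUL.fromBlocks [Fintype m] [DecidableEq m] [Fintype n] [DecidableEq n] [Ring R]
    [Preorder α] {b : m ⊕ n → α} (hb : ∀ i j, b (Sum.inl i) ≤ b (Sum.inr j)) {A : Matrix m m R}
    {B : Matrix m n R} {C : Matrix n m R} {D : Matrix n n R} [Invertible D]
    (hS : HasPUL (b ∘ Sum.inl) (A - B * ⅟D * C)) (hD : D.BlockTriangular (b ∘ Sum.inr)) :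
    HasPUL b (fromBlocks A B C D) := by
  rw [hasPUL_iff_exists_submatrix] at hS ⊢
  obtain ⟨σ, U, L, hU, hL, hS⟩ := hS
  refine ⟨σ.sumCongr 1, Matrix.fromBlocks U (B.submatrix σ.symm id) 0 D,
    Matrix.fromBlocks L 0 (⅟D * C) 1, blockTriangular_fromBlocks_zero₂₁ hb _ hU hD,
    blockTriangular_toDual_fromBlocks_zero₁₂ hb _ hL blockTriangular_one, ?_⟩
  have hA : A = (U * L + B.submatrix σ.symm id * (⅟D * C)).submatrix σ id := by
    rw [← sub_add_cancel A (B * ⅟D * C), hS, Matrix.mul_assoc]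
    ext i j
    simp [Matrix.mul_apply]
  rw [fromBlocks_multiply, Matrix.mul_invOf_cancel_left]
  ext (i | i) (j | j)
  · simpa using congr_fun₂ hA i j
  all_goals simp

theorem hasPUL_of_isUnit [Fintype ι] [DecidableEq ι] [CommRing R] [IsLocalRing R] [LinearOrder α]
    (b : ι → α) {A : Matrix ι ι R} (hA : IsUnit A) : HasPUL b A := by
  induction hcard : Fintype.card ι generalizing ι with
  | zero =>
    have := Fintype.card_eq_zero_iff.mp hcard
    exact ⟨1, 1, 1, blockTriangular_one, blockTriangular_one, Subsingleton.elim _ _⟩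
  | succ N ih =>
    have : Nonempty ι := Fintype.card_pos_iff.mp (hcard ▸ N.succ_pos)
    obtain ⟨k, hk⟩ := Finite.exists_max b
    obtain ⟨r, hr⟩ := exists_isUnit_apply_of_isUnit hA k
    let f : {i // i ≠ k} ⊕ Unit ≃ ι :=
      (optionEquivSumPUnit _).symm.trans (optionSubtypeNe k)
    let e := f.trans (swap r k)
    let A' := A.submatrix e f
    have hpivot : IsUnit A'.toBlocks₂₂ := by
      simpa [isUnit_iff_isUnit_det, toBlocks₂₂, A', e, f] using hr
    obtain ⟨_⟩ := hpivot.nonempty_invertible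
    have hschur : IsUnit (A'.toBlocks₁₁ - A'.toBlocks₁₂ * ⅟A'.toBlocks₂₂ * A'.toBlocks₂₁) := by
      rw [← isUnit_fromBlocks_iff_of_invertible₂₂, fromBlocks_toBlocks]
      exact (isUnit_submatrix_equiv _ _).mpr hA
    have hcard' : Fintype.card {i // i ≠ k} = N := by simp [hcard]
    have hA' : HasPUL (b ∘ f) A' := by
      rw [← fromBlocks_toBlocks A']
      exact .fromBlocks (fun i _ => hk (f (.inl i))) (ih _ hschur hcard')
        (fun _ _ hlt => absurd hlt (lt_irrefl _))
    exact .of_submatrix e f hA'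

theorem PUL_decomposition_general [Fintype ι] [DecidableEq ι] [CommRing R] [IsLocalRing R]
    [LinearOrder α] (b : ι → α) {A : Matrix ι ι R} (hA : IsUnit A) :
    ∃ (σ : Perm ι) (U L : Matrix ι ι R), U.BlockTriangular b ∧ IsUnit U ∧
      L.BlockTriangular (toDual ∘ b) ∧ IsUnit L ∧ A = σ.permMatrix R * U * L := by
  obtain ⟨σ, U, L, hU, hL, rfl⟩ := hasPUL_of_isUnit b hA
  obtain ⟨hPU, hL_unit⟩ := IsUnit.mul_iff.mp hA
  exact ⟨σ, U, L, hU, isUnit_of_mul_isUnit_right hPU, hL, hL_unit, rfl⟩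

end

/-- Every invertible `n×n` matrix over `𝔽₂` admits a PUL decomposition
`A = P·U·L` with `P` a permutation matrix, `U` invertible upper-triangular,
`L` invertible lower-triangular. -/
theorem PUL_decomposition (n : ℕ) (A : Matrix (Fin n) (Fin n) (ZMod 2))
    (hinv : IsUnit A) :
    ∃ P U L : Matrix (Fin n) (Fin n) (ZMod 2),
      IsPermMatrix P ∧
      (∀ i j : Fin n, (j : ℕ) < (i : ℕ) → U i j = 0) ∧ IsUnit U ∧
      (∀ i j : Fin n, (i : ℕ) < (j : ℕ) → L i j = 0) ∧ IsUnit L ∧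
      A = P * U * L := by
  obtain ⟨σ, U, L, hU, hU_unit, hL, hL_unit, hA⟩ :=
    PUL_decomposition_general (fun i : Fin n => (i : ℕ)) hinv
  exact ⟨σ.permMatrix (ZMod 2), U, L, isPermMatrix_permMatrix σ, fun _ _ hji => hU hji, hU_unit,
    fun _ _ hij => hL hij, hL_unit, hA⟩
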